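/- Fix constants h, ε, η, λ, M > 0 and d ∈ ℕ. Let g : ℝ × ℝ^d → ℝ^d be continuous with ‖g(t,x)‖ ≤ M for all (t,x) and ‖g(t,x) − g(t,y)‖ ≤ λ·‖x − y‖ for all t, x, y. Let v : ℝ → ℝ^d be differentiable with v'(t) = h·ε·g(t, v(t)) for all t ≥ 0, and define the kernel-averaged vector field g_η(t,x) = (1/η)·∫₀^η ρ(s/η)·g(t+s, x) ds. Then for every t with 0 ≤ t ≤ 1/ε, ‖∫₀^t g(τ, v(τ)) dτ − ∫₀^t g_η(τ, v(τ)) dτ‖ ≤ C₀·(2 + λ·h)·M·η. -/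

import Mathlib

/-!
After rescaling, the averaged field is `∫₀¹ ρ(s) g(τ + ηs, x) ds`. Since `ρ` has mass one, by Fubini
the error is the `ρ`-average over `s ∈ [0, 1]` of the errors caused by a pure time shift `σ = ηs`,
namely `∫₀ᵗ g(τ, v τ) dτ - ∫₀ᵗ g(τ + σ, v τ) dτ`. Inserting `∫₀ᵗ g(τ + σ, v (τ + σ)) dτ` splits
this into a translation error, at most `2Mσ` since only two end intervals of length `σ` differ, and
a Lipschitz error, at most `λ · hεMσ · t ≤ λhMσ` since `v` moves with speed at most `hεM`.
-/

open MeasureTheory Set intervalIntegral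
open scoped NNReal

section

variable {X E : Type*} [NormedAddCommGroup E] [NormedSpace ℝ E] {a b : ℝ}

lemma norm_integral_sub_integral_comp_add_right_le {F : ℝ → E} {M : ℝ}
    (hF : ∀ x y, IntervalIntegrable F volume x y) (hM : ∀ τ, ‖F τ‖ ≤ M) (σ : ℝ) :
    ‖(∫ τ in a..b, F τ) - ∫ τ in a..b, F (τ + σ)‖ ≤ 2 * M * |σ| := by
  have norm_end_le (x : ℝ) : ‖∫ τ in x..x + σ, F τ‖ ≤ M * |σ| := by
    simpa using norm_integral_le_of_norm_le_const (a := x) (b := x + σ) fun τ _ => hM τ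
  calc ‖(∫ τ in a..b, F τ) - ∫ τ in a..b, F (τ + σ)‖
      = ‖(∫ τ in a..a + σ, F τ) - ∫ τ in b..b + σ, F τ‖ := by
        rw [integral_comp_add_right,
          integral_interval_sub_interval_comm (hF _ _) (hF _ _) (hF _ _)]
    _ ≤ M * |σ| + M * |σ| := norm_sub_le_of_le (norm_end_le a) (norm_end_le b)
    _ = 2 * M * |σ| := by ring

lemma norm_integral_sub_integral_time_shift_le [PseudoMetricSpace X] {g : ℝ × X → E} {w : ℝ → X}
    {M : ℝ} {K L : ℝ≥0} (hg : Continuous g) (hgM : ∀ p, ‖g p‖ ≤ M)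
    (hgK : ∀ τ, LipschitzWith K fun x => g (τ, x)) (hw : LipschitzWith L w) (σ : ℝ) :
    ‖(∫ τ in a..b, g (τ, w τ)) - ∫ τ in a..b, g (τ + σ, w τ)‖
      ≤ (2 * M + K * L * |b - a|) * |σ| := by
  have hwc : Continuous w := hw.continuous
  have translation_le :
      ‖(∫ τ in a..b, g (τ, w τ)) - ∫ τ in a..b, g (τ + σ, w (τ + σ))‖ ≤ 2 * M * |σ| :=
    norm_integral_sub_integral_comp_add_right_le (F := fun τ => g (τ, w τ))
      (Continuous.intervalIntegrable (by fun_prop)) (fun τ => hgM _) σ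
  have integrand_le (τ : ℝ) : ‖g (τ + σ, w (τ + σ)) - g (τ + σ, w τ)‖ ≤ K * (L * |σ|) := by
    calc ‖g (τ + σ, w (τ + σ)) - g (τ + σ, w τ)‖
        ≤ K * dist (w (τ + σ)) (w τ) := by
          simpa only [dist_eq_norm] using (hgK (τ + σ)).dist_le_mul (w (τ + σ)) (w τ)
      _ ≤ K * (L * |σ|) := by
          gcongr
          simpa [Real.dist_eq] using hw.dist_le_mul (τ + σ) τ
  have lipschitz_le :
      ‖(∫ τ in a..b, g (τ + σ, w (τ + σ))) - ∫ τ in a..b, g (τ + σ, w τ)‖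
        ≤ K * (L * |σ|) * |b - a| := by
    rw [← integral_sub (Continuous.intervalIntegrable (by fun_prop) _ _)
      (Continuous.intervalIntegrable (by fun_prop) _ _)]
    exact norm_integral_le_of_norm_le_const fun τ _ => integrand_le τ
  linarith [norm_sub_le_norm_sub_add_norm_sub (∫ τ in a..b, g (τ, w τ))
    (∫ τ in a..b, g (τ + σ, w (τ + σ))) (∫ τ in a..b, g (τ + σ, w τ))]

lemma norm_sub_integral_smul_le [CompleteSpace E] {ρ φ : ℝ → ℝ} {G : ℝ → E} {x : E}
    (hab : a ≤ b) (hρ0 : ∀ s ∈ Icc a b, 0 ≤ ρ s) (hρint : ∫ s in a..b, ρ s = 1)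
    (hG : IntervalIntegrable (fun s => ρ s • G s) volume a b)
    (hφ : IntervalIntegrable (fun s => ρ s * φ s) volume a b)
    (hGφ : ∀ s ∈ Icc a b, ‖x - G s‖ ≤ φ s) :
    ‖x - ∫ s in a..b, ρ s • G s‖ ≤ ∫ s in a..b, ρ s * φ s := by
  have hρ : IntervalIntegrable ρ volume a b :=
    intervalIntegrable_of_integral_ne_zero (hρint.trans_ne one_ne_zero)
  have average_eq : x - ∫ s in a..b, ρ s • G s = ∫ s in a..b, ρ s • (x - G s) := by
    simp_rw [smul_sub]
    rw [intervalIntegral.integral_sub (hρ.smul_continuousOn continuousOn_const) hG,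
      intervalIntegral.integral_smul_const, hρint, one_smul]
  rw [average_eq]
  refine norm_integral_le_of_norm_le hab (.of_forall fun s hs => ?_) hφ
  have hs' := Ioc_subset_Icc_self hs
  rw [norm_smul, Real.norm_of_nonneg (hρ0 s hs')]
  exact mul_le_mul_of_nonneg_left (hGφ s hs') (hρ0 s hs')

/-- The kernel-averaged vector field `g_η(t, x) = (1/η) ∫₀^η ρ(s/η) g(t + s, x) ds`, in which only
the time variable of `g` is averaged. At `η = 0` its value is `0`, not `g`. -/
noncomputable def kernelAverage (ρ : ℝ → ℝ) (η : ℝ) (g : ℝ × X → E) (p : ℝ × X) : E :=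
  (1 / η) • ∫ s in (0 : ℝ)..η, ρ (s / η) • g (p.1 + s, p.2)

lemma kernelAverage_eq_integral_unitInterval (ρ : ℝ → ℝ) {η : ℝ} (hη : η ≠ 0) (g : ℝ × X → E)
    (p : ℝ × X) :
    kernelAverage ρ η g p = ∫ s in (0 : ℝ)..1, ρ s • g (p.1 + η * s, p.2) := by
  have rescale := inv_smul_integral_comp_div (a := 0) (b := η)
    (fun s => ρ s • g (p.1 + η * s, p.2)) η
  simpa only [kernelAverage, one_div, zero_div, div_self hη, mul_div_cancel₀ _ hη] using rescale

lemma integral_kernelAverage_comp [TopologicalSpace X] {ρ : ℝ → ℝ} {η : ℝ} {g : ℝ × X → E}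
    {w : ℝ → X} (hρ : IntervalIntegrable ρ volume 0 1) (hη : η ≠ 0) (hg : Continuous g)
    (hw : Continuous w) :
    ∫ τ in a..b, kernelAverage ρ η g (τ, w τ)
      = ∫ s in (0 : ℝ)..1, ρ s • ∫ τ in a..b, g (τ + η * s, w τ) := by
  have kernel_integrable :
      IntegrableOn (fun p : ℝ × ℝ => ρ p.2) (uIoc a b ×ˢ uIoc 0 1) := by
    have : IsFiniteMeasure (volume.restrict (uIoc a b)) :=
      inferInstanceAs (IsFiniteMeasure (volume.restrict (Ioc _ _)))
    rw [IntegrableOn, Measure.volume_eq_prod, ← Measure.prod_restrict]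
    exact hρ.def'.integrable.comp_snd _
  have integrand_integrable :
      IntegrableOn (fun p : ℝ × ℝ => ρ p.2 • g (p.1 + η * p.2, w p.1))
        (uIoc a b ×ˢ uIoc 0 1) :=
    kernel_integrable.smul_continuousOn_of_subset (K := uIcc a b ×ˢ uIcc 0 1)
      (Continuous.continuousOn (by fun_prop)) (measurableSet_uIoc.prod measurableSet_uIoc)
      (isCompact_uIcc.prod isCompact_uIcc) (prod_mono uIoc_subset_uIcc uIoc_subset_uIcc)
  simp_rw [kernelAverage_eq_integral_unitInterval ρ hη, ← intervalIntegral.integral_smul]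
  exact intervalIntegral_intervalIntegral_swap integrand_integrable

lemma norm_integral_sub_integral_kernelAverage_le [CompleteSpace E] [PseudoMetricSpace X]
    {ρ : ℝ → ℝ} {η M : ℝ} {K L : ℝ≥0} {g : ℝ × X → E} {w : ℝ → X}
    (hρ0 : ∀ s ∈ Icc (0 : ℝ) 1, 0 ≤ ρ s) (hρint : ∫ s in (0 : ℝ)..1, ρ s = 1) (hη : η ≠ 0)
    (hg : Continuous g) (hgM : ∀ p, ‖g p‖ ≤ M) (hgK : ∀ τ, LipschitzWith K fun x => g (τ, x))
    (hw : LipschitzWith L w) :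
    ‖(∫ τ in a..b, g (τ, w τ)) - ∫ τ in a..b, kernelAverage ρ η g (τ, w τ)‖
      ≤ (∫ s in (0 : ℝ)..1, ρ s * s) * ((2 * M + K * L * |b - a|) * |η|) := by
  have hwc : Continuous w := hw.continuous
  have hρ : IntervalIntegrable ρ volume 0 1 :=
    intervalIntegrable_of_integral_ne_zero (hρint.trans_ne one_ne_zero)
  have shifted_continuous : Continuous fun s => ∫ τ in a..b, g (τ + η * s, w τ) :=
    continuous_parametric_intervalIntegral_of_continuous' (by fun_prop) _ _
  have shift_le (s : ℝ) (hs : s ∈ Icc (0 : ℝ) 1) :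
      ‖(∫ τ in a..b, g (τ, w τ)) - ∫ τ in a..b, g (τ + η * s, w τ)‖
        ≤ s * ((2 * M + K * L * |b - a|) * |η|) := by
    calc ‖(∫ τ in a..b, g (τ, w τ)) - ∫ τ in a..b, g (τ + η * s, w τ)‖
        ≤ (2 * M + K * L * |b - a|) * |η * s| :=
          norm_integral_sub_integral_time_shift_le hg hgM hgK hw (η * s)
      _ = s * ((2 * M + K * L * |b - a|) * |η|) := by
          rw [abs_mul, abs_of_nonneg hs.1]
          ring
  rw [integral_kernelAverage_comp hρ hη hg hwc,
    ← intervalIntegral.integral_mul_const]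
  simp_rw [mul_assoc (ρ _)]
  exact norm_sub_integral_smul_le zero_le_one hρ0 hρint
    (hρ.smul_continuousOn shifted_continuous.continuousOn)
    (hρ.mul_continuousOn (Continuous.continuousOn (by fun_prop))) shift_le

lemma lipschitzOnWith_of_hasDerivWithinAt_smul {u v : ℝ → E} {c M : ℝ} {s : Set ℝ}
    (hs : Convex ℝ s) (huM : ∀ τ ∈ s, ‖u τ‖ ≤ M)
    (hv : ∀ τ ∈ s, HasDerivWithinAt v (c • u τ) s τ) :
    LipschitzOnWith (|c| * M).toNNReal v s := by
  refine hs.lipschitzOnWith_of_nnnorm_hasDerivWithin_le hv fun τ hτ => ?_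
  rw [← norm_toNNReal, norm_smul, Real.norm_eq_abs]
  exact Real.toNNReal_le_toNNReal (mul_le_mul_of_nonneg_left (huM τ hτ) (abs_nonneg c))

lemma lipschitzWith_comp_max_of_lipschitzOnWith_Ici [PseudoEMetricSpace X] {v : ℝ → X} {L : ℝ≥0}
    (hv : LipschitzOnWith L v (Ici a)) : LipschitzWith L fun τ => v (max τ a) := by
  simpa [Function.comp_def] using
    hv.comp (LipschitzWith.id.max_const a).lipschitzOnWith fun τ (_ : τ ∈ univ) => le_max_right τ a

theorem exact_trajectory_averaged_integral_bound_general [CompleteSpace E] {ρ : ℝ → ℝ}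
    {c h η M t : ℝ} {K : ℝ≥0} {g : ℝ × E → E} {v : ℝ → E}
    (hρ0 : ∀ s ∈ Icc (0 : ℝ) 1, 0 ≤ ρ s) (hρint : ∫ s in (0 : ℝ)..1, ρ s = 1) (hη : 0 < η)
    (hg : Continuous g) (hgM : ∀ p, ‖g p‖ ≤ M) (hgK : ∀ τ, LipschitzWith K fun x => g (τ, x))
    (hv : ∀ τ ∈ Ici (0 : ℝ), HasDerivWithinAt v (c • g (τ, v τ)) (Ici 0) τ)
    (ht : 0 ≤ t) (hct : |c| * t ≤ h) :
    ‖(∫ τ in (0 : ℝ)..t, g (τ, v τ)) - ∫ τ in (0 : ℝ)..t, kernelAverage ρ η g (τ, v τ)‖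
      ≤ (∫ s in (0 : ℝ)..1, ρ s * s) * (2 + K * h) * M * η := by
  have hM : 0 ≤ M := (norm_nonneg _).trans (hgM 0)
  have moment_nonneg : 0 ≤ ∫ s in (0 : ℝ)..1, ρ s * s :=
    integral_nonneg zero_le_one fun s hs => mul_nonneg (hρ0 s hs) hs.1
  -- `v` may fail to be continuous at negative times, so it is replaced by `τ ↦ v (max τ 0)`.
  have extension_eq (f : ℝ × E → E) :
      ∫ τ in (0 : ℝ)..t, f (τ, v τ) = ∫ τ in (0 : ℝ)..t, f (τ, v (max τ 0)) :=
    integral_congr fun τ hτ => by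
      simp only [max_eq_left (uIcc_of_le ht ▸ hτ : τ ∈ Icc 0 t).1]
  have extension_lipschitz : LipschitzWith (|c| * M).toNNReal fun τ => v (max τ 0) :=
    lipschitzWith_comp_max_of_lipschitzOnWith_Ici
      (lipschitzOnWith_of_hasDerivWithinAt_smul (convex_Ici 0) (fun τ _ => hgM (τ, v τ)) hv)
  rw [extension_eq g, extension_eq (kernelAverage ρ η g)]
  calc _ ≤ (∫ s in (0 : ℝ)..1, ρ s * s) * ((2 * M + K * (|c| * M).toNNReal * |t - 0|) * |η|) :=
        norm_integral_sub_integral_kernelAverage_le hρ0 hρint hη.ne' hg hgM hgK extension_lipschitz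
    _ = (∫ s in (0 : ℝ)..1, ρ s * s) * ((2 + K * (|c| * t)) * M * η) := by
        rw [Real.coe_toNNReal _ (by positivity), sub_zero, abs_of_nonneg ht, abs_of_pos hη]
        ring
    _ ≤ (∫ s in (0 : ℝ)..1, ρ s * s) * ((2 + K * h) * M * η) := by gcongr
    _ = (∫ s in (0 : ℝ)..1, ρ s * s) * (2 + K * h) * M * η := by ring

end

/-- Intermediate claim in the appendix of the paper: the exact trajectory of
`v' = h·ε·g(t,v)` satisfies the averaged integral equation up to an `O(η)` error `E₀`:
`‖∫₀^t g(τ,v(τ)) dτ − ∫₀^t g_η(τ,v(τ)) dτ‖ ≤ C₀·(2+λ·h)·M·η` for `0 ≤ t ≤ 1/ε`,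
where `g_η(t,x) = (1/η)∫₀^η ρ(s/η)·g(t+s,x) ds`. -/
theorem exact_trajectory_averaged_integral_bound
    (ρ : ℝ → ℝ) (hρc : Continuous ρ) (hρ0 : ∀ s, 0 ≤ ρ s)
    (hρsupp : ∀ s, s ∉ Set.Icc (0:ℝ) 1 → ρ s = 0)
    (hρint : (∫ s in (0:ℝ)..1, ρ s) = 1)
    (C₀ : ℝ) (hC₀ : C₀ = ∫ s in (0:ℝ)..1, ρ s * s)
    (h ε η lam M : ℝ) (hh : 0 < h) (hε : 0 < ε) (hη : 0 < η)
    (hlam : 0 < lam) (hM : 0 < M)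
    (d : ℕ)
    (g : ℝ × EuclideanSpace ℝ (Fin d) → EuclideanSpace ℝ (Fin d))
    (hgc : Continuous g)
    (hgM : ∀ p, ‖g p‖ ≤ M)
    (hgLip : ∀ t x y, ‖g (t, x) - g (t, y)‖ ≤ lam * ‖x - y‖)
    (v : ℝ → EuclideanSpace ℝ (Fin d))
    (hv : ∀ t, 0 ≤ t → HasDerivAt v ((h * ε) • g (t, v t)) t)
    (gη : ℝ × EuclideanSpace ℝ (Fin d) → EuclideanSpace ℝ (Fin d))
    (hgη : ∀ t x, gη (t, x) = (1/η) • ∫ s in (0:ℝ)..η, ρ (s/η) • g (t + s, x))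
    (t : ℝ) (ht0 : 0 ≤ t) (ht1 : t ≤ 1 / ε) :
    ‖(∫ τ in (0:ℝ)..t, g (τ, v τ)) - ∫ τ in (0:ℝ)..t, gη (τ, v τ)‖
      ≤ C₀ * (2 + lam * h) * M * η := by
  lift lam to ℝ≥0 using hlam.le
  obtain rfl : gη = kernelAverage ρ η g := funext fun p => hgη p.1 p.2
  have hgK (τ : ℝ) : LipschitzWith lam fun x => g (τ, x) :=
    .of_dist_le_mul fun x y => by simpa only [dist_eq_norm] using hgLip τ x y
  have hct : |h * ε| * t ≤ h := by
    rw [abs_of_pos (mul_pos hh hε), mul_assoc]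
    exact mul_le_of_le_one_right hh.le ((le_div_iff₀' hε).1 ht1)
  rw [hC₀]
  exact exact_trajectory_averaged_integral_bound_general (fun s _ => hρ0 s) hρint hη hgc hgM hgK
    (fun τ hτ => (hv τ hτ).hasDerivWithinAt) ht0 hct
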